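/- Let β > 1. For any a ∈ [0, ∞], the level set E_β(a) = {(x,y) ∈ [0,1)² : lim_n (log W_n^β(x,y))/n exists and equals a} has Hausdorff dimension 2. -/

import Mathlib

open Filter MeasureTheory Set

/-- The β-transformation T_β(x) = βx − ⌊βx⌋. -/
noncomputable def betaT (β : ℝ) : ℝ → ℝ := fun x => β * x - ⌊β * x⌋

/-- The (i+1)-th digit of the β-expansion of x (0-indexed). -/
noncomputable def betaDigit (β x : ℝ) (i : ℕ) : ℤ := ⌊β * (betaT β)^[i] x⌋

/-- A finite word is β-admissible if some x ∈ [0,1) has β-expansion beginning with it. -/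
def IsAdmissibleWord (β : ℝ) (w : List ℤ) : Prop :=
  ∃ x ∈ Set.Ico (0:ℝ) 1, ∀ i (h : i < w.length), w.get ⟨i, h⟩ = betaDigit β x i

/-- An infinite sequence is β-admissible if it is the digit sequence of some x ∈ [0,1). -/
def IsAdmissibleSeq (β : ℝ) (e : ℕ → ℤ) : Prop :=
  ∃ x ∈ Set.Ico (0:ℝ) 1, ∀ i, e i = betaDigit β x i

/-- The basic interval (cylinder) of a word. -/
def cylinder (β : ℝ) (w : List ℤ) : Set ℝ :=
  {x | x ∈ Set.Ico (0:ℝ) 1 ∧ ∀ i (h : i < w.length), betaDigit β x i = w.get ⟨i, h⟩}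

/-- A basic interval is full if its length is β^{-n}. -/
def IsFull (β : ℝ) (w : List ℤ) : Prop :=
  volume (cylinder β w) = ENNReal.ofReal (1 / β ^ w.length)

-- The infinite β-expansion of 1: the periodic modification if the expansion of 1
-- terminates, and the expansion of 1 itself otherwise (0-indexed).
open Classical in
noncomputable def betaStar (β : ℝ) : ℕ → ℤ :=
  if h : ∃ n, betaDigit β 1 n ≠ 0 ∧ ∀ i, n < i → betaDigit β 1 i = 0 then
    fun i =>
      if i % (h.choose + 1) = h.choose then betaDigit β 1 h.choose - 1
      else betaDigit β 1 (i % (h.choose + 1))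
  else betaDigit β 1

/-- Strict lexicographic order on integer sequences. -/
def lexLt (a b : ℕ → ℤ) : Prop := ∃ n, (∀ i, i < n → a i = b i) ∧ a n < b n

/-- l_n(β): the length of the longest run of zeros following the n-th digit
(1-indexed position n) in the infinite β-expansion of 1. -/
noncomputable def zeroRunLen (β : ℝ) (n : ℕ) : ℕ∞ :=
  ⨆ k ∈ {k : ℕ | ∀ j, j < k → betaStar β (n + j) = 0}, (k : ℕ∞)

/-- A₀: the set of bases β > 1 with bounded zero-runs in the expansion of 1. -/
def A0 : Set ℝ := {β | 1 < β ∧ ∃ C : ℕ, ∀ n, 1 ≤ n → zeroRunLen β n ≤ (C : ℕ∞)}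

/-- The waiting time W_n^β(x,y): first k ≥ 1 with T_β^k x in the n-th basic interval of y. -/
noncomputable def waitingTime (β x y : ℝ) (n : ℕ) : ℕ∞ :=
  sInf {k : ℕ∞ | ∃ m : ℕ, k = (m : ℕ∞) ∧ 1 ≤ m ∧
    ∀ i, i < n → betaDigit β ((betaT β)^[m] x) i = betaDigit β y i}

/-- (log W_n^β(x,y)) / n as an extended real, with value ⊤ when W_n = ∞. -/
noncomputable def waitingRatio (β x y : ℝ) (n : ℕ) : EReal :=
  if h : waitingTime β x y n = ⊤ then ⊤
  else (((Real.log ((waitingTime β x y n).untop h : ℕ)) / n : ℝ) : EReal)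


open Filter MeasureTheory Set

/-- partially full left endpoint -/
def PFull (β : ℝ) (n : ℕ) (a r : ℝ) : Prop :=
  0 ≤ a ∧ 0 < r ∧ r ≤ 1 ∧ a + r / β ^ n ≤ 1 ∧
    ∀ u, 0 ≤ u → u < r → (betaT β)^[n] (a + u / β ^ n) = u ∧
      ∀ i < n, betaDigit β (a + u / β ^ n) i = betaDigit β a i

lemma pfull_zero_start (β : ℝ) : PFull β 0 0 1 := by
  refine ⟨le_rfl, one_pos, le_rfl, by simp, fun u h0 h1 => ⟨by simp, by simp⟩⟩

lemma PFull.child {β : ℝ} (hβ : 1 < β) {n : ℕ} {a r : ℝ} (h : PFull β n a r) (j : ℕ)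
    (hj : (j : ℝ) < β * r) : PFull β (n + 1) (a + j / β ^ (n + 1)) (min 1 (β * r - j)) := by
  obtain ⟨ha, hr, hr1, har, H⟩ := h
  have hb : 0 < β := by linarith
  have hbn : 0 < β ^ n := by positivity
  have key : ∀ u, 0 ≤ u → u < min 1 (β * r - j) →
      (betaT β)^[n] (a + j / β ^ (n + 1) + u / β ^ (n + 1)) = (j + u) / β ∧
      (∀ i < n, betaDigit β (a + j / β ^ (n + 1) + u / β ^ (n + 1)) i = betaDigit β a i) ∧
      betaDigit β (a + j / β ^ (n + 1) + u / β ^ (n + 1)) n = j := by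
    intro u hu0 hu
    have hu1 := lt_of_lt_of_le hu (min_le_left _ _)
    have hu2 := lt_of_lt_of_le hu (min_le_right _ _)
    have e : a + j / β ^ (n + 1) + u / β ^ (n + 1) = a + ((j + u) / β) / β ^ n := by
      field_simp; ring
    have hlt : (j + u) / β < r := by rw [div_lt_iff₀ hb]; linarith
    obtain ⟨h1, h2⟩ := H ((j + u) / β) (by positivity) hlt
    rw [e]
    refine ⟨h1, h2, ?_⟩
    unfold betaDigit
    rw [h1, mul_div_cancel₀ _ hb.ne', Int.floor_eq_iff]
    push_cast
    constructor <;> linarith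
  have hm : 0 < min 1 (β * r - j) := lt_min one_pos (by linarith)
  refine ⟨by positivity, hm, min_le_left _ _, ?_, ?_⟩
  · calc a + j / β ^ (n + 1) + min 1 (β * r - j) / β ^ (n + 1)
        ≤ a + j / β ^ (n + 1) + (β * r - j) / β ^ (n + 1) := by
          gcongr; exact min_le_right _ _
      _ = a + r / β ^ n := by field_simp; ring
      _ ≤ 1 := har
  · intro u hu0 hu
    obtain ⟨k1, k2, k3⟩ := key u hu0 hu
    obtain ⟨l1, l2, l3⟩ := key 0 le_rfl hm
    rw [zero_div, add_zero] at l2 l3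
    constructor
    · rw [Function.iterate_succ_apply']
      have : betaT β ((betaT β)^[n] (a + j / β ^ (n + 1) + u / β ^ (n + 1)))
        = β * ((betaT β)^[n] (a + j / β ^ (n + 1) + u / β ^ (n + 1)))
          - betaDigit β (a + j / β ^ (n + 1) + u / β ^ (n + 1)) n := rfl
      rw [this, k3, k1, mul_div_cancel₀ _ hb.ne']
      push_cast; ring
    · intro i hi
      rcases Nat.lt_succ_iff_lt_or_eq.1 hi with hi | rfl
      · rw [k2 i hi, l2 i hi]
      · rw [k3, l3]

lemma PFull.zeros {β : ℝ} (hβ : 1 < β) {n : ℕ} {a r : ℝ} (h : PFull β n a r) (k : ℕ) :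
    PFull β (n + k) a (min 1 (β ^ k * r)) := by
  have hb : 0 < β := by linarith
  induction k with
  | zero => simpa [h.2.2.1] using h
  | succ k ih =>
    have := ih.child hβ 0 (by push_cast; exact mul_pos hb ih.2.1)
    simp only [Nat.cast_zero, zero_div, add_zero, sub_zero] at this
    rw [show n + (k + 1) = n + k + 1 from rfl]
    convert this using 1
    rw [pow_succ', mul_assoc]
    rcases le_total 1 (β ^ k * r) with h1 | h1
    · rw [min_eq_left h1, min_eq_left, min_eq_left] <;> nlinarith
    · rw [min_eq_right h1]

lemma pfull_zero {β : ℝ} (hβ : 1 < β) (n : ℕ) : PFull β n 0 1 := by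
  have := (pfull_zero_start β).zeros hβ n
  rw [mul_one, min_eq_left (one_le_pow₀ hβ.le), zero_add] at this
  exact this

lemma PFull.prependZero {β : ℝ} (hβ : 1 < β) {n : ℕ} {a : ℝ} (h : PFull β n a 1) :
    PFull β (n + 1) (a / β) 1 ∧ a / β + 1 / β ^ (n + 1) ≤ 1 / β := by
  obtain ⟨ha, hr, hr1, har, H⟩ := h
  have hb : 0 < β := by linarith
  have hbn : 0 < β ^ n := by positivity
  have e : ∀ u, a / β + u / β ^ (n + 1) = (a + u / β ^ n) / β := by
    intro u; field_simp; ring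
  have hT : ∀ u, 0 ≤ u → u < 1 → betaDigit β (a / β + u / β ^ (n + 1)) 0 = 0 ∧
      betaT β (a / β + u / β ^ (n + 1)) = a + u / β ^ n := by
    intro u h0 h1
    have hfl : ⌊β * (a / β + u / β ^ (n + 1))⌋ = 0 := by
      rw [e, mul_div_cancel₀ _ hb.ne', Int.floor_eq_zero_iff]
      refine ⟨by positivity, lt_of_lt_of_le ?_ har⟩
      gcongr
    refine ⟨by simpa [betaDigit] using hfl, ?_⟩
    unfold betaT
    rw [hfl, e, mul_div_cancel₀ _ hb.ne']; simp
  have hle : a / β + 1 / β ^ (n + 1) ≤ 1 / β := by rw [e]; gcongr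
  have h1b : 1 / β ≤ 1 := by rw [div_le_one hb]; exact hβ.le
  refine ⟨⟨by positivity, one_pos, le_rfl, hle.trans h1b, ?_⟩, hle⟩
  intro u h0 h1
  obtain ⟨t1, t2⟩ := hT u h0 h1
  obtain ⟨s1, s2⟩ := hT 0 le_rfl one_pos
  simp only [zero_div, add_zero] at s1 s2
  refine ⟨by rw [Function.iterate_succ_apply, t2]; exact (H u h0 h1).1, ?_⟩
  intro i hi
  cases i with
  | zero => rw [t1, s1]
  | succ i =>
    have := (H u h0 h1).2 i (by omega)
    unfold betaDigit at this ⊢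
    rw [Function.iterate_succ_apply, Function.iterate_succ_apply, t2, s2, this]

lemma PFull.iter_self {β : ℝ} {n : ℕ} {a r : ℝ} (h : PFull β n a r) : (betaT β)^[n] a = 0 := by
  have := (h.2.2.2.2 0 le_rfl h.2.1).1
  simpa using this

lemma sum_min_ceil {t : ℝ} (ht : 0 < t) :
    ∑ j : Fin ⌈t⌉₊, min 1 (t - (j : ℕ)) = t := by
  obtain ⟨m, hm⟩ : ∃ m, ⌈t⌉₊ = m + 1 := ⟨⌈t⌉₊ - 1, by have := Nat.ceil_pos.2 ht; omega⟩
  have h1 : t ≤ m + 1 := by have := Nat.le_ceil t; rw [hm] at this; exact_mod_cast this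
  have h2 : (m : ℝ) < t := by rw [← Nat.lt_ceil]; omega
  rw [hm, Fin.sum_univ_castSucc]
  have : ∀ j : Fin m, min 1 (t - ((j.castSucc : Fin (m+1)) : ℕ)) = 1 := by
    intro j
    apply min_eq_left
    have : ((j : ℕ) : ℝ) + 1 ≤ m := by exact_mod_cast j.2
    simp only [Fin.val_castSucc]
    linarith
  simp only [this]
  simp only [Finset.sum_const, Finset.card_univ, Fintype.card_fin, nsmul_eq_mul, mul_one, Fin.val_last]
  rw [min_eq_right (by linarith)]; ring

lemma exists_family {β : ℝ} (hβ : 1 < β) (n : ℕ) :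
    ∃ (ι : Type) (_ : Fintype ι) (a r : ι → ℝ), Function.Injective a ∧
      (∀ i, PFull β n (a i) (r i)) ∧ ∑ i, r i = β ^ n ∧
      (Fintype.card ι : ℝ) ≤ ∑ j ∈ Finset.range (n + 1), β ^ j := by
  have hb : 0 < β := by linarith
  induction n with
  | zero =>
    exact ⟨Unit, inferInstance, fun _ => 0, fun _ => 1, fun _ _ _ => rfl,
      fun _ => pfull_zero_start β, by simp, by simp⟩
  | succ n ih =>
    obtain ⟨ι, _, a, r, hinj, hP, hs, hc⟩ := ih
    have hlt : ∀ x : (Σ i : ι, Fin ⌈β * r i⌉₊), ((x.2 : ℕ) : ℝ) < β * r x.1 := by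
      intro x
      rw [← Nat.lt_ceil]; exact x.2.2
    refine ⟨Σ i : ι, Fin ⌈β * r i⌉₊, inferInstance, fun x => a x.1 + (x.2 : ℕ) / β ^ (n + 1),
      fun x => min 1 (β * r x.1 - (x.2 : ℕ)), ?_, fun x => (hP x.1).child hβ _ (hlt x), ?_, ?_⟩
    · have hT : ∀ x : (Σ i : ι, Fin ⌈β * r i⌉₊),
          (betaT β)^[n] (a x.1 + (x.2 : ℕ) / β ^ (n + 1)) = (x.2 : ℕ) / β := by
        intro x
        have := ((hP x.1).2.2.2.2 ((x.2 : ℕ) / β) (by positivity)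
          (by rw [div_lt_iff₀ hb]; linarith [hlt x])).1
        rwa [div_div, ← pow_succ'] at this
      intro x y hxy
      have h1 := hT x
      have h2 := hT y
      simp only at hxy
      rw [hxy, h2] at h1
      have h3 : ((y.2 : ℕ) : ℝ) = (x.2 : ℕ) := by field_simp at h1; exact h1
      rw [h3] at hxy
      have h4 : x.1 = y.1 := hinj (by linarith)
      obtain ⟨x1, x2⟩ := x
      obtain ⟨y1, y2⟩ := y
      simp only at h4 h3
      subst h4
      congr 1
      apply Fin.ext
      exact_mod_cast h3.symm
    · rw [Fintype.sum_sigma]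
      simp only
      rw [Finset.sum_congr rfl (fun i _ => sum_min_ceil (mul_pos hb (hP i).2.1)),
        ← Finset.mul_sum, hs, pow_succ']
    · rw [Fintype.card_sigma]
      simp only [Fintype.card_fin]
      push_cast
      calc ∑ i, ((⌈β * r i⌉₊ : ℕ) : ℝ) ≤ ∑ i, (β * r i + 1) := by
            apply Finset.sum_le_sum
            intro i _
            exact (Nat.ceil_lt_add_one (mul_pos hb (hP i).2.1).le).le
        _ = β ^ (n + 1) + Fintype.card ι := by
            rw [Finset.sum_add_distrib, ← Finset.mul_sum, hs, pow_succ']; simp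
        _ ≤ _ := by rw [Finset.sum_range_succ _ (n + 1)]; linarith

/-- The alphabet. -/
lemma exists_alphabet {β : ℝ} (hβ : 1 < β) {s : ℝ} (hs : s < 1) :
    ∃ (L M : ℕ) (A : Fin M → ℝ), 1 ≤ L ∧ 2 ≤ M ∧ β ^ (s * L) ≤ (M : ℝ) ∧
      Function.Injective A ∧ ∀ i, A i ≠ 0 ∧ PFull β L (A i) 1 ∧ A i + 1 / β ^ L ≤ 1 / β := by
  have hb : 0 < β := by linarith
  set C : ℝ := β / (β - 1) with hC
  have hC0 : 0 < C := div_pos hb (by linarith)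
  obtain ⟨k, hk⟩ := pow_unbounded_of_one_lt (2 * C) hβ
  -- choose n
  have hlim : Tendsto (fun n : ℕ => β ^ ((1 - s) * (n : ℝ))) atTop atTop := by
    have h1 : Tendsto (fun n : ℕ => Real.log β * ((1 - s) * (n : ℝ))) atTop atTop := by
      apply Tendsto.const_mul_atTop (Real.log_pos hβ)
      exact Tendsto.const_mul_atTop (by linarith) tendsto_natCast_atTop_atTop
    have := Real.tendsto_exp_atTop.comp h1
    refine this.congr (fun n => ?_)
    simp [Real.rpow_def_of_pos hb]
  have hlim2 : Tendsto (fun n : ℕ => β ^ n) atTop atTop := tendsto_pow_atTop_atTop_of_one_lt hβ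
  obtain ⟨n, hn1, hn2⟩ := ((hlim.eventually_ge_atTop (4 * β ^ (s * (k + 1)))).and
    (hlim2.eventually_ge_atTop 8)).exists
  obtain ⟨ι, _, a, r, hinj, hP, hsum, hcard⟩ := exists_family hβ n
  classical
  have hcard' : (Fintype.card ι : ℝ) ≤ C * β ^ n := by
    refine hcard.trans ?_
    rw [geom_sum_eq hβ.ne', hC, div_mul_eq_mul_div]
    have h1 : β ^ (n + 1) = β * β ^ n := pow_succ' β n
    exact div_le_div_of_nonneg_right (by linarith) (by linarith)
  set G : Finset ι := Finset.univ.filter (fun i => 1 ≤ β ^ k * r i ∧ a i ≠ 0) with hG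
  have hGcard : β ^ n / 2 - 1 ≤ (G.card : ℝ) := by
    have h1 : β ^ n ≤ ∑ i, ((if 1 ≤ β ^ k * r i ∧ a i ≠ 0 then (1:ℝ) else 0)
        + (if a i = 0 then 1 else 0) + 1 / (2 * C)) := by
      rw [← hsum]
      apply Finset.sum_le_sum
      intro i _
      have hri := (hP i).2.2.1
      have : 0 < 1 / (2 * C) := by positivity
      by_cases h0 : a i = 0
      · rw [if_neg (by tauto), if_pos h0]; linarith
      · by_cases h1 : 1 ≤ β ^ k * r i
        · rw [if_pos ⟨h1, h0⟩, if_neg h0]; linarith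
        · rw [if_neg (by tauto), if_neg h0]
          rw [zero_add, zero_add, le_div_iff₀ (by positivity)]
          push Not at h1
          nlinarith [(hP i).2.1]
    rw [Finset.sum_add_distrib, Finset.sum_add_distrib] at h1
    have h2 : ∑ i, (if 1 ≤ β ^ k * r i ∧ a i ≠ 0 then (1:ℝ) else 0) = G.card := by
      rw [hG, Finset.sum_boole]
    have h3 : ∑ i, (if a i = 0 then (1:ℝ) else 0) ≤ 1 := by
      rw [Finset.sum_boole]
      have : (Finset.univ.filter (fun i => a i = 0)).card ≤ 1 := by
        rw [Finset.card_le_one]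
        intro x hx y hy
        simp at hx hy
        exact hinj (hx.trans hy.symm)
      exact_mod_cast this
    have h4 : ∑ _i : ι, 1 / (2 * C) ≤ β ^ n / 2 := by
      rw [Finset.sum_const, nsmul_eq_mul, Finset.card_univ]
      calc (Fintype.card ι : ℝ) * (1 / (2 * C)) ≤ (C * β ^ n) * (1 / (2 * C)) := by gcongr
        _ = β ^ n / 2 := by field_simp
    linarith
  have hG4 : β ^ n / 4 ≤ (G.card : ℝ) := by linarith
  let e := G.equivFin.symm
  refine ⟨n + k + 1, G.card, fun i => a (e i).1 / β, by omega, ?_, ?_, ?_, ?_⟩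
  · have : (2 : ℝ) ≤ G.card := by linarith
    exact_mod_cast this
  · refine le_trans ?_ hG4
    have : β ^ (s * ((n + k + 1 : ℕ) : ℝ)) * β ^ ((1 - s) * (n:ℝ)) = β ^ n * β ^ (s * (k + 1)) := by
      rw [← Real.rpow_add hb, ← Real.rpow_natCast β n, ← Real.rpow_add hb]
      congr 1; push_cast; ring
    have hp : 0 < β ^ (s * ((k:ℝ) + 1)) := Real.rpow_pos_of_pos hb _
    have hp2 : 0 < β ^ (s * ((n + k + 1 : ℕ) : ℝ)) := Real.rpow_pos_of_pos hb _
    rw [le_div_iff₀ (by norm_num)]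
    have h5 : β ^ (s * ((n + k + 1 : ℕ) : ℝ)) * (4 * β ^ (s * ((k:ℝ) + 1))) ≤ β ^ n * β ^ (s * ((k:ℝ) + 1)) := by
      rw [← this]; gcongr
    have h6 : (β ^ (s * ((n + k + 1 : ℕ) : ℝ)) * 4) * β ^ (s * ((k:ℝ) + 1)) ≤ β ^ n * β ^ (s * ((k:ℝ) + 1)) := by
      linarith
    exact le_of_mul_le_mul_right h6 hp
  · intro i j hij
    simp only at hij
    have : a (e i).1 = a (e j).1 := by field_simp at hij; exact hij
    exact e.injective (Subtype.ext (hinj this))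
  · intro i
    have hi := (Finset.mem_filter.1 (e i).2)
    have h1 := (hP (e i).1).zeros hβ k
    rw [min_eq_left hi.2.1] at h1
    have h2 := h1.prependZero hβ
    exact ⟨div_ne_zero hi.2.2 hb.ne', h2.1, h2.2⟩

lemma PFull.exists_digit_ne {β : ℝ} (hβ : 1 < β) {n : ℕ} {a r : ℝ} (h : PFull β n a r) (ha : a ≠ 0) :
    ∃ i < n, betaDigit β a i ≠ 0 := by
  by_contra! hcon
  have : ∀ i ≤ n, (betaT β)^[i] a = β ^ i * a := by
    intro i
    induction i with
    | zero => simp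
    | succ i ih =>
      intro hi
      have h1 := hcon i (by omega)
      rw [Function.iterate_succ_apply']
      have : betaT β ((betaT β)^[i] a) = β * ((betaT β)^[i] a) - betaDigit β a i := rfl
      rw [this, h1, ih (by omega)]
      push_cast; ring
  have h2 := this n le_rfl
  rw [h.iter_self] at h2
  have : 0 < β ^ n := by positivity
  rcases mul_eq_zero.1 h2.symm with h | h
  · linarith
  · exact ha h

open Filter MeasureTheory Set

/-- coding map -/
noncomputable def bcode {κ : Type} (β : ℝ) (L : ℕ) (V : κ → ℝ) (σ : ℕ → κ) : ℝ :=
  ∑' i, V (σ i) / (β ^ L) ^ i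

/-- good alphabet -/
structure GoodAlph {κ : Type} (β : ℝ) (L : ℕ) (V : κ → ℝ) : Prop where
  hβ : 1 < β
  hL : 1 ≤ L
  full : ∀ k, PFull β L (V k) 1
  le : ∀ k, V k + 1 / β ^ L ≤ 1 / β

namespace GoodAlph
variable {κ : Type} {β : ℝ} {L : ℕ} {V : κ → ℝ}

lemma Q_gt (h : GoodAlph β L V) : 1 < β ^ L := one_lt_pow₀ h.hβ (by have := h.hL; omega)

lemma V_nonneg (h : GoodAlph β L V) (k : κ) : 0 ≤ V k := (h.full k).1

lemma V_le (h : GoodAlph β L V) (k : κ) : V k ≤ (1 / β) * (1 - 1 / β ^ L) := by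
  have h1 := h.le k
  have hb := h.hβ
  have : (1 / β) * (1 / β ^ L) ≤ 1 / β ^ L := by
    apply mul_le_of_le_one_left
    · have := h.Q_gt; positivity
    · rw [div_le_one (by linarith)]; linarith
  linarith

lemma hasSum_geo (h : GoodAlph β L V) :
    HasSum (fun i : ℕ => (1 / β) * (1 - 1 / β ^ L) / (β ^ L) ^ i) (1 / β) := by
  have hQ := h.Q_gt
  have hb := h.hβ
  have h1 : (β ^ L)⁻¹ < 1 := inv_lt_one_of_one_lt₀ hQ
  have := (hasSum_geometric_of_lt_one (by positivity) h1).mul_left ((1 / β) * (1 - 1 / β ^ L))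
  have e : (1 / β) * (1 - 1 / β ^ L) * (1 - (β ^ L)⁻¹)⁻¹ = 1 / β := by
    rw [one_div (β ^ L), mul_assoc, mul_inv_cancel₀ (by linarith), mul_one]
  rw [e] at this
  simpa only [inv_pow, ← div_eq_mul_inv] using this

lemma term_nonneg (h : GoodAlph β L V) (σ : ℕ → κ) (i : ℕ) : 0 ≤ V (σ i) / (β ^ L) ^ i := by
  have := h.V_nonneg (σ i)
  have := h.Q_gt
  positivity

lemma term_le (h : GoodAlph β L V) (σ : ℕ → κ) (i : ℕ) :
    V (σ i) / (β ^ L) ^ i ≤ (1 / β) * (1 - 1 / β ^ L) / (β ^ L) ^ i := by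
  have := h.V_le (σ i)
  have := h.Q_gt
  gcongr

lemma summable (h : GoodAlph β L V) (σ : ℕ → κ) : Summable fun i => V (σ i) / (β ^ L) ^ i :=
  Summable.of_nonneg_of_le (h.term_nonneg σ) (h.term_le σ) h.hasSum_geo.summable

lemma code_nonneg (h : GoodAlph β L V) (σ : ℕ → κ) : 0 ≤ bcode β L V σ :=
  tsum_nonneg (h.term_nonneg σ)

lemma code_le (h : GoodAlph β L V) (σ : ℕ → κ) : bcode β L V σ ≤ 1 / β := by
  rw [← h.hasSum_geo.tsum_eq]
  exact Summable.tsum_le_tsum (h.term_le σ) (h.summable σ) h.hasSum_geo.summable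

lemma code_lt (h : GoodAlph β L V) (σ : ℕ → κ) : bcode β L V σ < 1 := by
  refine lt_of_le_of_lt (h.code_le σ) ?_
  have := h.hβ
  rw [div_lt_one (by linarith)]; exact this

lemma code_succ (h : GoodAlph β L V) (σ : ℕ → κ) :
    bcode β L V σ = V (σ 0) + bcode β L V (fun i => σ (i + 1)) / β ^ L := by
  unfold bcode
  rw [(h.summable σ).tsum_eq_zero_add, ← tsum_div_const]
  simp only [pow_zero, div_one]
  congr 1
  apply tsum_congr
  intro i
  rw [pow_succ, div_div]

lemma iter_L (h : GoodAlph β L V) (σ : ℕ → κ) :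
    (betaT β)^[L] (bcode β L V σ) = bcode β L V (fun i => σ (i + 1)) := by
  conv_lhs => rw [h.code_succ σ]
  exact ((h.full (σ 0)).2.2.2.2 _ (h.code_nonneg _) (h.code_lt _)).1

lemma digit_L (h : GoodAlph β L V) (σ : ℕ → κ) (i : ℕ) (hi : i < L) :
    betaDigit β (bcode β L V σ) i = betaDigit β (V (σ 0)) i := by
  conv_lhs => rw [h.code_succ σ]
  exact ((h.full (σ 0)).2.2.2.2 _ (h.code_nonneg _) (h.code_lt _)).2 i hi

lemma iter_mul (h : GoodAlph β L V) (σ : ℕ → κ) (k : ℕ) :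
    (betaT β)^[k * L] (bcode β L V σ) = bcode β L V (fun i => σ (i + k)) := by
  induction k with
  | zero => simp
  | succ k ih =>
    rw [Nat.succ_mul, add_comm, Function.iterate_add_apply, ih, h.iter_L]
    congr 1; ext i; congr 1; ring

lemma digit (h : GoodAlph β L V) (σ : ℕ → κ) (k i : ℕ) (hi : i < L) :
    betaDigit β (bcode β L V σ) (k * L + i) = betaDigit β (V (σ k)) i := by
  have := h.digit_L (fun i => σ (i + k)) i hi
  rw [← h.iter_mul, zero_add] at this
  rw [← this]
  unfold betaDigit
  rw [add_comm, Function.iterate_add_apply]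

lemma sep (h : GoodAlph β L V) {a b : κ} (hab : V a < V b) : V a + 1 / β ^ L ≤ V b := by
  by_contra! hc
  have hQ := h.Q_gt
  have h1 := ((h.full a).2.2.2.2 ((V b - V a) * β ^ L) (by
    apply mul_nonneg <;> linarith) (by
      rw [← lt_div_iff₀ (by linarith)]; linarith)).1
  rw [mul_div_cancel_right₀ _ (by linarith), add_sub_cancel, (h.full b).iter_self] at h1
  rcases mul_eq_zero.1 h1.symm with h2 | h2 <;> linarith

lemma gap_zero (h : GoodAlph β L V) {σ τ : ℕ → κ} (hab : V (σ 0) < V (τ 0)) :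
    (1 - 1 / β) / (β ^ L) ≤ bcode β L V τ - bcode β L V σ := by
  rw [h.code_succ σ, h.code_succ τ]
  have h1 := h.sep hab
  have hQ := h.Q_gt
  have h2 : 0 ≤ bcode β L V (fun i => τ (i + 1)) / β ^ L :=
    div_nonneg (h.code_nonneg _) (by linarith)
  have h3 : bcode β L V (fun i => σ (i + 1)) / β ^ L ≤ (1 / β) / β ^ L := by
    have := h.code_le (fun i => σ (i + 1))
    gcongr
  rw [sub_div]
  linarith

lemma gap (h : GoodAlph β L V) (hV : Function.Injective V) (i : ℕ) : ∀ {σ τ : ℕ → κ},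
    σ i ≠ τ i → (1 - 1 / β) / (β ^ L) ^ (i + 1) ≤ |bcode β L V σ - bcode β L V τ| := by
  have hQ := h.Q_gt
  have hb : 0 ≤ 1 - 1 / β := by
    have := h.hβ
    rw [sub_nonneg, div_le_one (by linarith)]; linarith
  have h0 : ∀ {σ τ : ℕ → κ}, σ 0 ≠ τ 0 →
      (1 - 1 / β) / (β ^ L) ≤ |bcode β L V σ - bcode β L V τ| := by
    intro σ τ hne
    rcases lt_or_gt_of_ne (fun e => hne (hV e)) with hlt | hlt
    · rw [abs_sub_comm]; exact (h.gap_zero hlt).trans (le_abs_self _)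
    · exact (h.gap_zero hlt).trans (le_abs_self _)
  induction i with
  | zero => intro σ τ hne; simpa using h0 hne
  | succ i ih =>
    intro σ τ hne
    by_cases he : σ 0 = τ 0
    · have := ih (σ := fun i => σ (i + 1)) (τ := fun i => τ (i + 1)) hne
      rw [h.code_succ σ, h.code_succ τ, he, add_sub_add_left_eq_sub, ← sub_div, abs_div,
        abs_of_pos (show 0 < β ^ L by linarith), pow_succ, ← div_div]
      gcongr
    · refine le_trans ?_ (h0 he)
      gcongr
      exact le_self_pow₀ hQ.le (by omega)

end GoodAlph

open Filter MeasureTheory Set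

/-- inserted positions -/
def InI (p : ℕ → ℕ) (i : ℕ) : Prop := ∃ k, p k ≤ i ∧ i < p k + k + 5

/-- block sequence of y -/
def tauSeq {M : ℕ} (e : ℕ → Fin M) (j : ℕ) : Option (Fin M) :=
  if j < 3 then none else some (e (j - 3))

open Classical in
/-- block sequence of x -/
noncomputable def sigSeq {M : ℕ} (p : ℕ → ℕ) (d e : ℕ → Fin M) (i : ℕ) : Option (Fin M) :=
  if h : InI p i then
    (if i = p h.choose + h.choose + 4 then none else tauSeq e (i - p h.choose))
  else some (d (Nat.count (fun j => ¬ InI p j) i))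

structure Sparse (p : ℕ → ℕ) : Prop where
  pos : 1 ≤ p 0
  gap : ∀ k, p k + k + 6 ≤ p (k + 1)
  cube : ∀ k, (k + 2) ^ 3 ≤ p k

namespace Sparse
variable {p : ℕ → ℕ} {M : ℕ}

lemma mono (h : Sparse p) : StrictMono p := strictMono_nat_of_lt_succ (fun k => by
  have := h.gap k; omega)

lemma far (h : Sparse p) {j k : ℕ} (hjk : j < k) : p j + j + 6 ≤ p k :=
  (h.gap j).trans (h.mono.monotone hjk)

lemma uniq (h : Sparse p) {i j k : ℕ} (hj : p j ≤ i ∧ i < p j + j + 5)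
    (hk : p k ≤ i ∧ i < p k + k + 5) : j = k := by
  rcases lt_trichotomy j k with hlt | he | hlt
  · have := h.far hlt; omega
  · exact he
  · have := h.far hlt; omega

lemma sig_in (h : Sparse p) (d e : ℕ → Fin M) {i k : ℕ} (hk : p k ≤ i ∧ i < p k + k + 5) :
    sigSeq p d e i = if i = p k + k + 4 then none else tauSeq e (i - p k) := by
  have hI : InI p i := ⟨k, hk⟩
  have : hI.choose = k := h.uniq hI.choose_spec hk
  unfold sigSeq
  rw [dif_pos hI, this]

lemma sig_tau (h : Sparse p) (d e : ℕ → Fin M) {j k : ℕ} (hj : j < k + 4) :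
    sigSeq p d e (p k + j) = tauSeq e j := by
  rw [h.sig_in d e (i := p k + j) (k := k) (by omega), if_neg (by omega)]
  congr 1; omega

lemma sig_final (h : Sparse p) (d e : ℕ → Fin M) (k : ℕ) :
    sigSeq p d e (p k + (k + 4)) = none := by
  rw [h.sig_in d e (i := p k + (k + 4)) (k := k) (by omega), if_pos (by omega)]

open Classical in
lemma sig_free (d e : ℕ → Fin M) {i : ℕ} (hi : ¬ InI p i) :
    sigSeq p d e i = some (d (Nat.count (fun j => ¬ InI p j) i)) := by
  unfold sigSeq
  rw [dif_neg hi]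

lemma not_in_after (h : Sparse p) (k : ℕ) : ¬ InI p (p k + k + 5) := by
  rintro ⟨j, h1, h2⟩
  rcases lt_trichotomy j k with hlt | he | hlt
  · have := h.far hlt; omega
  · subst he; omega
  · have := h.far hlt; omega

lemma infinite (h : Sparse p) : {i | ¬ InI p i}.Infinite := by
  apply Set.infinite_of_injective_forall_mem (f := fun k => p k + k + 5)
  · apply StrictMono.injective
    intro a b hab
    have := h.far hab
    simp only; omega
  · exact h.not_in_after

lemma two_none (h : Sparse p) (d e : ℕ → Fin M) {b : ℕ} (h1 : sigSeq p d e b = none)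
    (h2 : sigSeq p d e (b + 1) = none) : ∃ k, b = p k ∨ b = p k + 1 := by
  classical
  by_cases hI : InI p b
  · obtain ⟨k, hk⟩ := hI
    refine ⟨k, ?_⟩
    by_contra hc
    by_cases hend : b = p k + k + 4
    · have : ¬ InI p (b + 1) := by
        have := h.not_in_after k
        rwa [hend]
      rw [sig_free d e this] at h2
      exact absurd h2 (by simp)
    · rw [h.sig_in d e hk, if_neg hend, tauSeq] at h1
      have h3 : b - p k < 3 := by
        by_contra h3; rw [if_neg h3] at h1; exact absurd h1 (by simp)
      have h4 : b + 1 = p k + 3 := by omega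
      rw [h4, h.sig_tau d e (by omega), tauSeq, if_neg (by omega)] at h2
      exact absurd h2 (by simp)
  · rw [sig_free d e hI] at h1
    exact absurd h1 (by simp)

end Sparse

/-- Combinatorial core: occurrences. -/
lemma occ_core {M L : ℕ} (hL : 1 ≤ L) {p : ℕ → ℕ} (h : Sparse p) (d e : ℕ → Fin M)
    (w : Option (Fin M) → ℕ → ℤ) (w0 : ∀ i < L, w none i = 0)
    (w1 : ∀ a, ∃ i < L, w (some a) i ≠ 0) (D Y : ℕ → ℤ)
    (hD : ∀ k i, i < L → D (k * L + i) = w (sigSeq p d e k) i)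
    (hY : ∀ k i, i < L → Y (k * L + i) = w (tauSeq e k) i)
    {m n : ℕ} (hn : 4 * L ≤ n) (hm : ∀ i < n, D (m + i) = Y i) :
    ∃ j, m = p j * L ∧ ∀ k, n ≥ (k + 5) * L → k < j := by
  have dm : ∀ i : ℕ, i = (i / L) * L + i % L ∧ i % L < L := fun i =>
    ⟨(Nat.div_add_mod' i L).symm, Nat.mod_lt _ (by omega)⟩
  have hY3 : ∀ i < 3 * L, Y i = 0 := by
    intro i hi
    rw [(dm i).1, hY _ _ (dm i).2]
    have : i / L < 3 := (Nat.div_lt_iff_lt_mul (by omega)).2 hi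
    rw [tauSeq, if_pos this]
    exact w0 _ (dm i).2
  have hD3 : ∀ i, m ≤ i → i < m + 3 * L → D i = 0 := by
    intro i h1 h2
    have := hm (i - m) (by omega)
    rw [Nat.add_sub_cancel' h1] at this
    rw [this]; exact hY3 _ (by omega)
  -- block index
  obtain ⟨b, hb1, hb2⟩ : ∃ b, m ≤ b * L ∧ b * L < m + L := by
    refine ⟨(m + L - 1) / L, ?_, ?_⟩
    · have := (dm (m + L - 1)); omega
    · have := (dm (m + L - 1)); omega
  have hnone : ∀ c, (∀ i < L, D (c * L + i) = 0) → sigSeq p d e c = none := by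
    intro c hc
    cases hs : sigSeq p d e c with
    | none => rfl
    | some a =>
      obtain ⟨i, hi, hne⟩ := w1 a
      have := hc i hi
      rw [hD c i hi, hs] at this
      exact absurd this hne
  have n1 : sigSeq p d e b = none := hnone b (fun i hi => hD3 _ (by omega) (by omega))
  have n2 : sigSeq p d e (b + 1) = none := hnone (b + 1) (fun i hi => by
    have : (b + 1) * L = b * L + L := by ring
    exact hD3 _ (by omega) (by omega))
  obtain ⟨j, hj⟩ := h.two_none d e n1 n2
  have hbj : p j * L ≤ b * L ∧ b * L ≤ p j * L + L := by
    rcases hj with rfl | rfl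
    · omega
    · have : (p j + 1) * L = p j * L + L := by ring
      omega
  -- first nonzero digit of e 0
  have hex := w1 (e 0)
  classical
  let z := Nat.find hex
  obtain ⟨hzL, hz⟩ : z < L ∧ w (some (e 0)) z ≠ 0 := Nat.find_spec hex
  have hzmin : ∀ i < z, w (some (e 0)) i = 0 := by
    intro i hi
    have := Nat.find_min hex hi
    push Not at this
    exact this (by omega)
  have hYz : Y (3 * L + z) ≠ 0 := by
    rw [hY 3 z hzL, tauSeq, if_neg (by omega)]; exact hz
  have hYlt : ∀ i < 3 * L + z, Y i = 0 := by
    intro i hi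
    by_cases h3 : i < 3 * L
    · exact hY3 i h3
    · obtain ⟨t, rfl⟩ := Nat.exists_eq_add_of_le (not_lt.1 h3)
      rw [hY 3 t (by omega), tauSeq, if_neg (by omega)]
      exact hzmin t (by omega)
  have hpj : ∀ i < (j + 4) * L, D (p j * L + i) = Y i := by
    intro i hi
    have h1 := dm i
    have h2 : i / L < j + 4 := (Nat.div_lt_iff_lt_mul (by omega)).2 hi
    have h3 : p j * L + i = (p j + i / L) * L + i % L := by rw [add_mul]; omega
    rw [h3, hD _ _ h1.2, h.sig_tau d e h2, ← hY _ _ h1.2, ← h1.1]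
  have h4L : 4 * L ≤ (j + 4) * L := Nat.mul_le_mul_right _ (by omega)
  have hmj : m = p j * L := by
    rcases lt_trichotomy m (p j * L) with hlt | he | hgt
    · exfalso
      have h1 := hm (3 * L + z) (by omega)
      apply hYz
      rw [← h1]
      by_cases h2 : m + (3 * L + z) < m + 3 * L
      · exact hD3 _ (by omega) h2
      · have h5 := hpj (m + (3 * L + z) - p j * L) (by omega)
        rw [Nat.add_sub_cancel' (by omega)] at h5
        rw [h5]
        exact hYlt _ (by omega)
    · exact he
    · exfalso
      have h1 := hpj (3 * L + z) (by omega)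
      have h2 := hm (p j * L + (3 * L + z) - m) (by omega)
      rw [Nat.add_sub_cancel' (by omega), h1] at h2
      apply hYz
      rw [h2]
      exact hYlt _ (by omega)
  refine ⟨j, hmj, ?_⟩
  intro k hk
  by_contra! hjk
  obtain ⟨i, hi, hne⟩ := w1 (e (j + 1))
  have h1 : (j + 5) * L ≤ n := le_trans (Nat.mul_le_mul_right _ (by omega)) hk
  have h2 : (j + 5) * L = (j + 4) * L + L := by ring
  have h3 := hm ((j + 4) * L + i) (by omega)
  have h4 : m + ((j + 4) * L + i) = (p j + (j + 4)) * L + i := by rw [hmj]; ring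
  rw [h4, hD _ _ hi, hY _ _ hi, h.sig_final d e, w0 i hi, tauSeq, if_neg (by omega),
    show j + 4 - 3 = j + 1 by omega] at h3
  exact hne h3.symm

lemma occ_exists {M L : ℕ} (hL : 1 ≤ L) {p : ℕ → ℕ} (h : Sparse p) (d e : ℕ → Fin M)
    (w : Option (Fin M) → ℕ → ℤ) (D Y : ℕ → ℤ)
    (hD : ∀ k i, i < L → D (k * L + i) = w (sigSeq p d e k) i)
    (hY : ∀ k i, i < L → Y (k * L + i) = w (tauSeq e k) i)
    (j : ℕ) : ∀ i < (j + 4) * L, D (p j * L + i) = Y i := by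
  intro i hi
  have h1 : i = (i / L) * L + i % L ∧ i % L < L :=
    ⟨(Nat.div_add_mod' i L).symm, Nat.mod_lt _ (by omega)⟩
  have h2 : i / L < j + 4 := (Nat.div_lt_iff_lt_mul (by omega)).2 hi
  have h3 : p j * L + i = (p j + i / L) * L + i % L := by rw [add_mul]; omega
  rw [h3, hD _ _ h1.2, h.sig_tau d e h2, ← hY _ _ h1.2, ← h1.1]

open Filter MeasureTheory Set

lemma sparse_of {f : ℕ → ℝ} (hf : Monotone f) : Sparse (fun k => ⌈Real.exp (f k)⌉₊ + (k + 3) ^ 3) := by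
  refine ⟨by simp, fun k => ?_, fun k => ?_⟩
  · have : ⌈Real.exp (f k)⌉₊ ≤ ⌈Real.exp (f (k + 1))⌉₊ :=
      Nat.ceil_mono (Real.exp_le_exp.2 (hf (by omega)))
    nlinarith
  · have : (k + 2) ^ 3 ≤ (k + 3) ^ 3 := Nat.pow_le_pow_left (by omega) 3
    omega

lemma tendsto_level (a : EReal) (h0 : 0 ≤ a) (L : ℕ) (hL : 1 ≤ L) :
    ∃ p : ℕ → ℕ, Sparse p ∧ ∀ W : ℕ → ℕ,
      (∀ n, 5 ≤ n / L → p (n / L - 4) * L ≤ W n ∧ W n ≤ p (n / L - 3) * L) →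
      Tendsto (fun n => ((Real.log (W n) / n : ℝ) : EReal)) atTop (nhds a) := by
  have hLr : (1 : ℝ) ≤ L := by exact_mod_cast hL
  -- general lower bound
  have low : ∀ (f : ℕ → ℝ) (W : ℕ → ℕ) (n : ℕ),
      (⌈Real.exp (f (n / L - 4))⌉₊ + ((n / L - 4) + 3) ^ 3) * L ≤ W n →
      f (n / L - 4) ≤ Real.log (W n) := by
    intro f W n h
    have h1 : Real.exp (f (n / L - 4)) ≤ W n := by
      refine (Nat.le_ceil _).trans ?_
      norm_cast
      refine le_trans ?_ h
      refine le_trans (Nat.le_add_right _ _) (Nat.le_mul_of_pos_right _ hL)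
    rw [Real.le_log_iff_exp_le (lt_of_lt_of_le (Real.exp_pos _) h1)]
    exact h1
  have hdiv : ∀ n, 5 ≤ n / L → (n : ℝ) - 5 * L ≤ L * ((n / L - 4 : ℕ) : ℝ) := by
    intro n hn
    have h1 := Nat.div_add_mod n L
    have h2 := Nat.mod_lt n (show L > 0 by omega)
    obtain ⟨t, ht⟩ := Nat.exists_eq_add_of_le hn
    rw [ht] at h1 ⊢
    rw [show 5 + t - 4 = t + 1 by omega]
    have h3 : n < L * (5 + t) + L := by omega
    have h4 : (n : ℝ) < L * (5 + t) + L := by exact_mod_cast h3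
    push_cast
    linarith
  have hN : ∀ᶠ n : ℕ in atTop, 5 ≤ n / L := by
    filter_upwards [eventually_ge_atTop (5 * L)] with n hn
    exact (Nat.le_div_iff_mul_le (by omega)).2 hn
  induction a with
  | bot => simp at h0
  | top =>
    refine ⟨_, sparse_of (f := fun k => (k : ℝ) ^ 2) (fun i j hij => by
      have : (i : ℝ) ≤ j := by exact_mod_cast hij
      simp only; gcongr), fun W hW => ?_⟩
    rw [EReal.tendsto_coe_nhds_top_iff]
    have ht : Tendsto (fun n : ℕ => (n : ℝ) * (1 / (4 * L ^ 2))) atTop atTop :=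
      Tendsto.atTop_mul_const (by positivity) tendsto_natCast_atTop_atTop
    refine tendsto_atTop_mono' _ ?_ ht
    filter_upwards [hN, eventually_ge_atTop (10 * L)] with n hn hn2
    have h1 := low (fun k => (k : ℝ) ^ 2) W n (hW n hn).1
    have h2 := hdiv n hn
    have h3 : (10 : ℝ) * L ≤ n := by exact_mod_cast hn2
    have hn0 : (0 : ℝ) < n := by linarith
    have h4 : (n : ℝ) / 2 ≤ L * ((n / L - 4 : ℕ) : ℝ) := by linarith
    have h5 : ((n : ℝ) / 2) ^ 2 ≤ (L * ((n / L - 4 : ℕ) : ℝ)) ^ 2 := by gcongr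
    rw [le_div_iff₀ hn0]
    refine le_trans ?_ h1
    rw [mul_pow] at h5
    rw [mul_one_div, div_mul_eq_mul_div, div_le_iff₀ (by positivity)]
    nlinarith
  | coe a =>
    have ha : 0 ≤ a := by exact_mod_cast h0
    refine ⟨_, sparse_of (f := fun k => a * L * k) (fun i j hij => by
      have : (i : ℝ) ≤ j := by exact_mod_cast hij
      simp only; gcongr), fun W hW => ?_⟩
    refine (continuous_coe_real_ereal.tendsto a).comp ?_
    have hinv : Tendsto (fun n : ℕ => (n : ℝ)⁻¹) atTop (nhds 0) := tendsto_inv_atTop_nhds_zero_nat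
    have hlog : Tendsto (fun n : ℕ => Real.log ((n : ℝ) + 5) / ((n : ℝ) + 5)) atTop (nhds 0) :=
      (Real.isLittleO_log_id_atTop.tendsto_div_nhds_zero).comp
        (tendsto_atTop_add_const_right _ 5 tendsto_natCast_atTop_atTop)
    have hlo : Tendsto (fun n : ℕ => a - a * 5 * L * (n : ℝ)⁻¹) atTop (nhds a) := by
      simpa using tendsto_const_nhds.sub (hinv.const_mul (a * 5 * L))
    have hhi : Tendsto (fun n : ℕ => a + 6 * (Real.log ((n : ℝ) + 5) / ((n : ℝ) + 5))
        + Real.log L * (n : ℝ)⁻¹) atTop (nhds a) := by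
      simpa using (tendsto_const_nhds.add (hlog.const_mul 6)).add (hinv.const_mul (Real.log L))
    refine tendsto_of_tendsto_of_tendsto_of_le_of_le' hlo hhi ?_ ?_
    · filter_upwards [hN, eventually_ge_atTop 1] with n hn hn1
      have hn0 : (0 : ℝ) < n := by exact_mod_cast hn1
      have h1 := low (fun k => a * L * k) W n (hW n hn).1
      have h2 := hdiv n hn
      rw [le_div_iff₀ hn0, sub_mul, mul_assoc _ (n : ℝ)⁻¹, inv_mul_cancel₀ hn0.ne']
      refine le_trans ?_ h1
      nlinarith
    · filter_upwards [hN, eventually_ge_atTop 5] with n hn hn1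
      have hn5 : (5 : ℝ) ≤ n := by exact_mod_cast hn1
      have hn0 : (0 : ℝ) < n := by linarith
      have hW0 : 0 < W n := lt_of_lt_of_le (by positivity) (hW n hn).1
      set k := n / L - 3 with hk
      have hkL : (L : ℝ) * k ≤ n := by
        have h1 : L * k ≤ n := le_trans (Nat.mul_le_mul_left _ (by omega)) (Nat.mul_div_le n L)
        exact_mod_cast h1
      have hkn : (k : ℝ) ≤ n := by
        have : k ≤ n := le_trans (by omega) (Nat.div_le_self n L)
        exact_mod_cast this
      have hup : (W n : ℝ) ≤ Real.exp (a * n) * ((n : ℝ) + 5) ^ 3 * L := by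
        have h1 : (W n : ℝ) ≤ ((⌈Real.exp (a * L * k)⌉₊ : ℝ) + ((k : ℝ) + 3) ^ 3) * L := by
          exact_mod_cast (hW n hn).2
        have h2 : (⌈Real.exp (a * L * k)⌉₊ : ℝ) ≤ Real.exp (a * L * k) + 1 :=
          (Nat.ceil_lt_add_one (Real.exp_pos _).le).le
        have h3 : Real.exp (a * L * k) ≤ Real.exp (a * n) := by
          apply Real.exp_le_exp.2
          rw [mul_assoc]; gcongr
        have h4 : 1 ≤ Real.exp (a * n) := Real.one_le_exp (by positivity)
        have h5 : ((k : ℝ) + 3) ^ 3 ≤ ((n : ℝ) + 3) ^ 3 := by gcongr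
        have h6 : 2 + ((n : ℝ) + 3) ^ 3 ≤ ((n : ℝ) + 5) ^ 3 := by nlinarith
        refine h1.trans ?_
        gcongr
        calc (⌈Real.exp (a * L * k)⌉₊ : ℝ) + ((k : ℝ) + 3) ^ 3
            ≤ Real.exp (a * n) * 2 + Real.exp (a * n) * ((n : ℝ) + 3) ^ 3 := by
              have : ((n : ℝ) + 3) ^ 3 ≤ Real.exp (a * n) * ((n : ℝ) + 3) ^ 3 :=
                le_mul_of_one_le_left (by positivity) h4
              linarith
          _ = Real.exp (a * n) * (2 + ((n : ℝ) + 3) ^ 3) := by ring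
          _ ≤ _ := by gcongr
      have hl : Real.log (W n) ≤ a * n + 3 * Real.log ((n : ℝ) + 5) + Real.log L := by
        have h1 := Real.log_le_log (by exact_mod_cast hW0) hup
        rw [Real.log_mul (by positivity) (by positivity), Real.log_mul (by positivity) (by positivity),
          Real.log_exp, Real.log_pow] at h1
        exact_mod_cast h1
      have hlg : 0 ≤ Real.log ((n : ℝ) + 5) := Real.log_nonneg (by linarith)
      have h7 : 3 * Real.log ((n : ℝ) + 5) ≤ 6 * (Real.log ((n : ℝ) + 5) / ((n : ℝ) + 5)) * n := by
        rw [mul_div_assoc', div_mul_eq_mul_div, le_div_iff₀ (by linarith)]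
        nlinarith
      rw [div_le_iff₀ hn0, add_mul, add_mul, mul_assoc (Real.log L), inv_mul_cancel₀ hn0.ne']
      linarith

/-- alphabet with zero -/
noncomputable def optV {M : ℕ} (A : Fin M → ℝ) : Option (Fin M) → ℝ := fun o => o.elim 0 A

lemma betaDigit_zero (β : ℝ) (i : ℕ) : betaDigit β 0 i = 0 := by
  have : (betaT β)^[i] 0 = 0 := by
    apply Function.iterate_fixed
    simp [betaT]
  simp [betaDigit, this]

lemma waiting_bounds {β : ℝ} {L M : ℕ} {A : Fin M → ℝ} (hG : GoodAlph β L (optV A))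
    (hA : ∀ i, A i ≠ 0) {p : ℕ → ℕ} (hp : Sparse p) (d e : ℕ → Fin M) (n : ℕ) (hn : 5 ≤ n / L) :
    ∃ W : ℕ, waitingTime β (bcode β L (optV A) (sigSeq p d e)) (bcode β L (optV A) (tauSeq e)) n = W
      ∧ p (n / L - 4) * L ≤ W ∧ W ≤ p (n / L - 3) * L := by
  have hL := hG.hL
  set x := bcode β L (optV A) (sigSeq p d e)
  set y := bcode β L (optV A) (tauSeq e)
  set S : Set ℕ∞ := {k : ℕ∞ | ∃ m : ℕ, k = (m : ℕ∞) ∧ 1 ≤ m ∧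
    ∀ i, i < n → betaDigit β ((betaT β)^[m] x) i = betaDigit β y i} with hS
  have hshift : ∀ m i, betaDigit β ((betaT β)^[m] x) i = betaDigit β x (m + i) := by
    intro m i
    unfold betaDigit
    rw [← Function.iterate_add_apply, add_comm]
  have hD : ∀ k i, i < L → betaDigit β x (k * L + i) = betaDigit β (optV A (sigSeq p d e k)) i :=
    fun k i hi => hG.digit _ k i hi
  have hY : ∀ k i, i < L → betaDigit β y (k * L + i) = betaDigit β (optV A (tauSeq e k)) i :=
    fun k i hi => hG.digit _ k i hi
  have hmodlt : n < (n / L + 1) * L := by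
    have := Nat.lt_div_mul_add (a := n) (show 0 < L by omega)
    rw [add_mul]; omega
  have hmem : ((p (n / L - 3) * L : ℕ) : ℕ∞) ∈ S := by
    refine ⟨_, rfl, ?_, ?_⟩
    · have h1 := hp.pos
      have h2 := hp.mono.monotone (Nat.zero_le (n / L - 3))
      exact Nat.mul_pos (by omega) (by omega)
    · intro i hi
      rw [hshift]
      refine occ_exists hL hp d e (fun o => betaDigit β (optV A o)) (betaDigit β x) (betaDigit β y) hD hY _ i ?_
      rw [show n / L - 3 + 4 = n / L + 1 by omega]; omega
  obtain ⟨m, hm, hm1, hmm⟩ : sInf S ∈ S := csInf_mem ⟨_, hmem⟩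
  refine ⟨m, hm, ?_, ?_⟩
  · have h4 : 5 * L ≤ n := (Nat.le_div_iff_mul_le (by omega)).1 hn
    obtain ⟨j, hj, hjk⟩ := occ_core hL hp d e (fun o => betaDigit β (optV A o))
      (fun i _ => betaDigit_zero β i)
      (fun a => (hG.full (some a)).exists_digit_ne hG.hβ (hA a))
      (betaDigit β x) (betaDigit β y) hD hY (m := m) (n := n) (by omega)
      (fun i hi => by rw [← hshift]; exact hmm i hi)
    have h5 := hjk (n / L - 5) (by
      rw [show n / L - 5 + 5 = n / L by omega]; exact Nat.div_mul_le_self n L)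
    rw [hj]
    exact Nat.mul_le_mul_right _ (hp.mono.monotone (by omega))
  · have h1 : sInf S ≤ ((p (n / L - 3) * L : ℕ) : ℕ∞) := sInf_le hmem
    rw [hm] at h1
    exact_mod_cast h1

lemma waitingRatio_eq {β x y : ℝ} {n W : ℕ} (h : waitingTime β x y n = W) :
    waitingRatio β x y n = ((Real.log W / n : ℝ) : EReal) := by
  unfold waitingRatio
  have hne : waitingTime β x y n ≠ ⊤ := by rw [h]; exact ENat.natCast_ne_top W
  rw [dif_neg hne]
  have key : ∀ (t : ℕ∞) (ht : t ≠ ⊤), t = (W : ℕ∞) → WithTop.untop t ht = W := by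
    rintro t ht rfl; rfl
  rw [key _ hne h]

lemma mem_level {β : ℝ} {a : EReal} (h0 : 0 ≤ a) {L M : ℕ} {A : Fin M → ℝ}
    (hG : GoodAlph β L (optV A)) (hA : ∀ i, A i ≠ 0) :
    ∃ p : ℕ → ℕ, Sparse p ∧ ∀ d e : ℕ → Fin M,
      Tendsto (fun n => waitingRatio β (bcode β L (optV A) (sigSeq p d e))
        (bcode β L (optV A) (tauSeq e)) n) atTop (nhds a) := by
  obtain ⟨p, hp, H⟩ := tendsto_level a h0 L hG.hL
  refine ⟨p, hp, fun d e => ?_⟩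
  have hb := waiting_bounds hG hA hp d e
  choose! W hW using hb
  refine (H W (fun n hn => (hW n hn).2)).congr' ?_
  filter_upwards [eventually_ge_atTop (5 * L)] with n hn
  have := hG.hL
  exact (waitingRatio_eq (hW n ((Nat.le_div_iff_mul_le (by omega)).2 hn)).1).symm

open Filter MeasureTheory Set

open Classical in
lemma Sparse.count_bound {p : ℕ → ℕ} (h : Sparse p) {ρ : ℝ} (hρ : 1 < ρ) :
    ∃ C : ℝ, 0 ≤ C ∧ ∀ i : ℕ, (i : ℝ) ≤ ρ * (Nat.count (fun j => ¬ InI p j) i : ℝ) + C := by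
  set δ : ℝ := 1 - 1 / ρ with hδ
  have hδ0 : 0 < δ := by rw [hδ, sub_pos, div_lt_one (by linarith)]; exact hρ
  refine ⟨ρ * (125 / δ ^ 2), by positivity, fun i => ?_⟩
  set c : ℕ := ((Finset.range i).filter (fun j => InI p j)).card with hc
  have hcount : Nat.count (fun j => ¬ InI p j) i + c = i := by
    rw [Nat.count_eq_card_filter_range, hc, add_comm, Finset.card_filter_add_card_filter_not,
      Finset.card_range]
  have hex : ∃ K, i ≤ p K := ⟨i, h.mono.le_apply⟩
  let K := Nat.find hex
  have hKmin : ∀ k < K, p k < i := fun k hk => not_le.1 (Nat.find_min hex hk)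
  have hK : i ≤ p K := Nat.find_spec hex
  have hcard : c ≤ K * (K + 5) := by
    have hsub : (Finset.range i).filter (fun j => InI p j) ⊆
        (Finset.range K).biUnion (fun k => Finset.Ico (p k) (p k + k + 5)) := by
      intro j hj
      rw [Finset.mem_filter, Finset.mem_range] at hj
      obtain ⟨hji, k, hk1, hk2⟩ := hj
      rw [Finset.mem_biUnion]
      refine ⟨k, ?_, by rw [Finset.mem_Ico]; exact ⟨hk1, hk2⟩⟩
      rw [Finset.mem_range]
      by_contra! hkK
      have := h.mono.monotone hkK
      omega
    refine (Finset.card_le_card hsub).trans ?_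
    have := Finset.card_biUnion_le_card_mul (Finset.range K)
      (fun k => Finset.Ico (p k) (p k + k + 5)) (K + 5) (by
        intro k hk
        rw [Finset.mem_range] at hk
        rw [Nat.card_Ico]; omega)
    rwa [Finset.card_range] at this
  have h1 : c ≤ 5 * (K + 1) ^ 2 := by nlinarith
  have h2 : c * (K + 1) ≤ 5 * i := by
    rcases Nat.eq_zero_or_pos K with h0 | h0
    · rw [h0] at hcard; simp at hcard; simp [hcard]
    · have h3 := hKmin (K - 1) (by omega)
      have h4 := h.cube (K - 1)
      rw [show K - 1 + 2 = K + 1 by omega] at h4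
      calc c * (K + 1) ≤ (5 * (K + 1) ^ 2) * (K + 1) := Nat.mul_le_mul_right _ h1
        _ = 5 * (K + 1) ^ 3 := by ring
        _ ≤ 5 * i := by omega
  have h1r : (c : ℝ) ≤ 5 * ((K : ℝ) + 1) ^ 2 := by exact_mod_cast h1
  have h2r : (c : ℝ) * ((K : ℝ) + 1) ≤ 5 * i := by exact_mod_cast h2
  have hfin : (c : ℝ) ≤ δ * i + 125 / δ ^ 2 := by
    by_cases hq : 5 ≤ δ * ((K : ℝ) + 1)
    · have : (c : ℝ) ≤ δ * i := by
        have hi : (0:ℝ) ≤ i := by positivity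
        have hq0 : (0:ℝ) < (K : ℝ) + 1 := by positivity
        refine le_of_mul_le_mul_right ?_ hq0
        nlinarith
      have : 0 ≤ 125 / δ ^ 2 := by positivity
      linarith
    · push Not at hq
      have : 5 * ((K : ℝ) + 1) ^ 2 ≤ 125 / δ ^ 2 := by
        rw [le_div_iff₀ (by positivity)]
        have h5 : (δ * ((K : ℝ) + 1)) ^ 2 ≤ 5 ^ 2 := by gcongr
        nlinarith
      have : 0 ≤ δ * i := by positivity
      linarith
  have hcr : (Nat.count (fun j => ¬ InI p j) i : ℝ) + c = i := by exact_mod_cast hcount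
  have h6 : (1 / ρ) * (i : ℝ) ≤ (Nat.count (fun j => ¬ InI p j) i : ℝ) + 125 / δ ^ 2 := by
    have : 1 / ρ = 1 - δ := by rw [hδ]; ring
    rw [this]; linarith
  rw [one_div, inv_mul_le_iff₀ (by linarith)] at h6
  linarith

lemma holder_core {κ : Type} {β : ℝ} {L : ℕ} {V : κ → ℝ} (hG : GoodAlph β L V)
    (hV : Function.Injective V) {M : ℕ} {s r ρ C : ℝ} (hM : β ^ (s * L) ≤ (M : ℝ)) (hr : 0 < r)
    (hrs : r * ρ ≤ s) :
    ∃ K : ℝ, 0 ≤ K ∧ ∀ (d d' : ℕ → Fin M) (σ σ' : ℕ → κ),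
      (∀ j, d j ≠ d' j → ∃ i : ℕ, (i : ℝ) ≤ ρ * j + C ∧ σ i ≠ σ' i) →
      |Real.ofDigits d - Real.ofDigits d'| ≤ K * |bcode β L V σ - bcode β L V σ'| ^ r := by
  have hQ := hG.Q_gt
  have hb := hG.hβ
  set Q := β ^ L with hQdef
  have hQ0 : 0 < Q := by linarith
  set γ : ℝ := 1 - 1 / β with hγ
  have hγ0 : 0 < γ := by rw [hγ, sub_pos, div_lt_one (by linarith)]; exact hb
  have hMs : Q ^ s ≤ (M : ℝ) := by
    refine le_trans (le_of_eq ?_) hM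
    rw [hQdef, ← Real.rpow_natCast, ← Real.rpow_mul (by linarith), mul_comm]
  refine ⟨γ ^ (-r) * Q ^ ((C + 1) * r), by positivity, fun d d' σ σ' H => ?_⟩
  by_cases hd : d = d'
  · subst hd
    simp only [sub_self, abs_zero]
    positivity
  have hex : ∃ j, d j ≠ d' j := Function.ne_iff.1 hd
  classical
  let j := Nat.find hex
  have hj : d j ≠ d' j := Nat.find_spec hex
  have hjm : ∀ i < j, d i = d' i := fun i hi => not_not.1 (Nat.find_min hex hi)
  obtain ⟨i, hi, hne⟩ := H j hj
  have hg := hG.gap hV i hne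
  rw [← hQdef, ← hγ] at hg
  refine (Real.abs_ofDigits_sub_ofDigits_le hjm).trans ?_
  have h1 : ((M : ℝ) ^ j)⁻¹ ≤ Q ^ (-(s * j)) := by
    rw [Real.rpow_neg hQ0.le, Real.rpow_mul hQ0.le, Real.rpow_natCast]
    gcongr
  have h2 : (γ / Q ^ (i + 1)) ^ r ≤ |bcode β L V σ - bcode β L V σ'| ^ r := by
    gcongr
  have h3 : γ ^ r * Q ^ (-((ρ * j + C + 1) * r)) ≤ (γ / Q ^ (i + 1)) ^ r := by
    rw [Real.div_rpow hγ0.le (by positivity), div_eq_mul_inv, ← Real.rpow_natCast, ← Real.rpow_mul hQ0.le,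
      ← Real.rpow_neg hQ0.le]
    gcongr
    · exact hQ.le
    · push_cast; linarith
  have h4 : Q ^ (-(s * j)) ≤ γ ^ (-r) * Q ^ ((C + 1) * r) * (γ ^ r * Q ^ (-((ρ * j + C + 1) * r))) := by
    have e1 : γ ^ (-r) * γ ^ r = 1 := by rw [← Real.rpow_add hγ0]; simp
    have e2 : Q ^ ((C + 1) * r) * Q ^ (-((ρ * j + C + 1) * r)) = Q ^ (-(r * ρ * j)) := by
      rw [← Real.rpow_add hQ0]; congr 1; ring
    calc Q ^ (-(s * j)) ≤ Q ^ (-(r * ρ * j)) := by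
          gcongr
          exact hQ.le
      _ = (γ ^ (-r) * γ ^ r) * (Q ^ ((C + 1) * r) * Q ^ (-((ρ * j + C + 1) * r))) := by
          rw [e1, e2, one_mul]
      _ = _ := by ring
  refine h1.trans (h4.trans ?_)
  gcongr
  exact h3.trans h2

lemma dimH_range_param {Θ : Type} {u v : Θ → ℝ × ℝ} {K : ℝ} (hK : 0 ≤ K) {r : NNReal} (hr : 0 < r)
    (h : ∀ a b, dist (v a) (v b) ≤ K * dist (u a) (u b) ^ (r : ℝ)) :
    dimH (range v) ≤ dimH (range u) / r := by
  rcases isEmpty_or_nonempty Θ with hE | hE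
  · simp [range_eq_empty]
  let g : ℝ × ℝ → ℝ × ℝ := fun q => v (Function.invFun u q)
  have hinv : ∀ q ∈ range u, u (Function.invFun u q) = q := fun q hq => Function.invFun_eq hq
  have hH : HolderOnWith K.toNNReal r g (range u) := by
    intro x hx y hy
    have h1 := h (Function.invFun u x) (Function.invFun u y)
    rw [hinv x hx, hinv y hy] at h1
    change _ ≤ ENNReal.ofReal K * _
    rw [edist_dist, edist_dist, ENNReal.ofReal_rpow_of_nonneg dist_nonneg r.coe_nonneg,
      ← ENNReal.ofReal_mul hK]
    exact ENNReal.ofReal_le_ofReal h1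
  have himg : g '' range u = range v := by
    apply Subset.antisymm
    · rintro _ ⟨q, _, rfl⟩; exact ⟨_, rfl⟩
    · rintro _ ⟨θ, rfl⟩
      refine ⟨u θ, ⟨θ, rfl⟩, ?_⟩
      have h1 := h (Function.invFun u (u θ)) θ
      rw [hinv (u θ) ⟨θ, rfl⟩, dist_self, Real.zero_rpow (by exact_mod_cast hr.ne'), mul_zero] at h1
      exact dist_le_zero.1 h1
  rw [← himg]
  exact hH.dimH_image_le hr

lemma optV_good {β : ℝ} (hβ : 1 < β) {L M : ℕ} {A : Fin M → ℝ} (hL : 1 ≤ L)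
    (h : ∀ i, A i ≠ 0 ∧ PFull β L (A i) 1 ∧ A i + 1 / β ^ L ≤ 1 / β) : GoodAlph β L (optV A) := by
  refine ⟨hβ, hL, ?_, ?_⟩
  · rintro (_ | i)
    · exact pfull_zero hβ L
    · exact (h i).2.1
  · rintro (_ | i)
    · simp only [optV, Option.elim, zero_add]
      have : β ≤ β ^ L := le_self_pow₀ hβ.le (by omega)
      gcongr
    · exact (h i).2.2

lemma optV_inj {M : ℕ} {A : Fin M → ℝ} (hA : Function.Injective A) (h0 : ∀ i, A i ≠ 0) :
    Function.Injective (optV A) := by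
  rintro (_ | i) (_ | j) hij
  · rfl
  · exact absurd hij.symm (h0 j)
  · exact absurd hij (h0 i)
  · exact congrArg some (hA hij)

lemma dimH_lower {β : ℝ} (hβ : 1 < β) {a : EReal} (h0 : 0 ≤ a) {r : NNReal} (hr : 0 < r) (hr1 : r < 1) :
    2 * (r : ENNReal) ≤ dimH {p : ℝ × ℝ | p.1 ∈ Set.Ico (0:ℝ) 1 ∧ p.2 ∈ Set.Ico (0:ℝ) 1 ∧
      Filter.Tendsto (fun n => waitingRatio β p.1 p.2 n) Filter.atTop (nhds a)} := by
  classical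
  have hr' : (0 : ℝ) < r := by exact_mod_cast hr
  have hr1' : (r : ℝ) < 1 := by exact_mod_cast hr1
  set s : ℝ := (1 + r) / 2 with hs
  have hs1 : s < 1 := by rw [hs]; linarith
  have hsr : r < s := by rw [hs]; linarith
  set ρ : ℝ := s / r with hρ
  have hρ1 : 1 < ρ := by rw [hρ, one_lt_div hr']; exact hsr
  have hrρ : r * ρ ≤ s := by rw [hρ, mul_div_cancel₀ _ hr'.ne']
  obtain ⟨L, M, A, hL, hM2, hM, hinj, hA⟩ := exists_alphabet hβ hs1
  have hG := optV_good hβ hL hA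
  have hV := optV_inj hinj (fun i => (hA i).1)
  obtain ⟨p, hp, hT⟩ := mem_level h0 hG (fun i => (hA i).1)
  obtain ⟨C1, hC1, hcount⟩ := hp.count_bound hρ1
  obtain ⟨K, hK, H⟩ := holder_core hG hV (C := C1 + 3) hM hr' hrρ
  let u : (ℕ → Fin M) × (ℕ → Fin M) → ℝ × ℝ := fun θ =>
    (bcode β L (optV A) (sigSeq p θ.1 θ.2), bcode β L (optV A) (tauSeq θ.2))
  let v : (ℕ → Fin M) × (ℕ → Fin M) → ℝ × ℝ := fun θ => (Real.ofDigits θ.1, Real.ofDigits θ.2)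
  have hd : ∀ θ θ', dist (v θ) (v θ') ≤ K * dist (u θ) (u θ') ^ (r : ℝ) := by
    intro θ θ'
    rw [Prod.dist_eq (x := v θ), Prod.dist_eq (x := u θ)]
    apply max_le
    · refine (H θ.1 θ'.1 (sigSeq p θ.1 θ.2) (sigSeq p θ'.1 θ'.2) ?_).trans ?_
      · intro j hj
        have hinf := hp.infinite
        refine ⟨Nat.nth (fun j => ¬ InI p j) j, ?_, ?_⟩
        · have h1 := hcount (Nat.nth (fun j => ¬ InI p j) j)
          rw [Nat.count_nth_of_infinite hinf] at h1
          linarith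
        · have h2 : ¬ InI p (Nat.nth (fun j => ¬ InI p j) j) := Nat.nth_mem_of_infinite hinf j
          rw [Sparse.sig_free _ _ h2, Sparse.sig_free _ _ h2, Nat.count_nth_of_infinite hinf]
          simpa using hj
      · gcongr
        exact le_max_left _ _
    · refine (H θ.2 θ'.2 (tauSeq θ.2) (tauSeq θ'.2) ?_).trans ?_
      · intro j hj
        refine ⟨j + 3, ?_, ?_⟩
        · push_cast
          have : (0:ℝ) ≤ j := by positivity
          nlinarith
        · unfold tauSeq
          rw [if_neg (by omega), if_neg (by omega)]
          simpa using hj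
      · gcongr
        exact le_max_right _ _
  have h1 := dimH_range_param hK hr hd
  have h2 : dimH (range v) = 2 := by
    have : (interior (range v)).Nonempty := by
      have hsub : Ioo (0:ℝ) 1 ×ˢ Ioo (0:ℝ) 1 ⊆ range v := by
        rintro ⟨x, y⟩ ⟨hx, hy⟩
        obtain ⟨d, -, hd⟩ := Real.ofDigits_SurjOn (b := M) (by omega) (Ioo_subset_Icc_self hx)
        obtain ⟨e, -, he⟩ := Real.ofDigits_SurjOn (b := M) (by omega) (Ioo_subset_Icc_self hy)
        exact ⟨(d, e), Prod.ext hd he⟩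
      refine ⟨(1/2, 1/2), interior_maximal hsub (isOpen_Ioo.prod isOpen_Ioo) ?_⟩
      constructor <;> constructor <;> norm_num
    rw [Real.dimH_of_nonempty_interior this]
    simp
  rw [h2] at h1
  have h3 : range u ⊆ {p : ℝ × ℝ | p.1 ∈ Set.Ico (0:ℝ) 1 ∧ p.2 ∈ Set.Ico (0:ℝ) 1 ∧
      Filter.Tendsto (fun n => waitingRatio β p.1 p.2 n) Filter.atTop (nhds a)} := by
    rintro _ ⟨θ, rfl⟩
    exact ⟨⟨hG.code_nonneg _, hG.code_lt _⟩, ⟨hG.code_nonneg _, hG.code_lt _⟩, hT θ.1 θ.2⟩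
  refine le_trans ?_ (dimH_mono h3)
  exact ENNReal.mul_le_of_le_div h1

/-- The level set E_β(a) = {(x,y) : R^β(x,y) = a} has Hausdorff dimension 2. -/
theorem dimH_waiting_level_set (β : ℝ) (hβ : 1 < β) (a : EReal) (h0 : 0 ≤ a) :
    dimH {p : ℝ × ℝ | p.1 ∈ Set.Ico (0:ℝ) 1 ∧ p.2 ∈ Set.Ico (0:ℝ) 1 ∧
      Filter.Tendsto (fun n => waitingRatio β p.1 p.2 n) Filter.atTop (nhds a)} = 2 := by
  apply le_antisymm
  · refine (dimH_mono (subset_univ _)).trans ?_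
    rw [Real.dimH_univ_eq_finrank]
    simp
  · apply ENNReal.le_of_forall_nnreal_lt
    intro c hc
    rcases eq_or_ne c 0 with rfl | hc0
    · simp
    have hc2 : c < 2 := by exact_mod_cast hc
    have h := dimH_lower hβ h0 (r := c / 2) (by positivity) (by
      rw [div_lt_one (by norm_num)]; exact hc2)
    refine le_trans (le_of_eq ?_) h
    rw [← ENNReal.coe_ofNat, ← ENNReal.coe_mul, mul_div_cancel₀ c (by norm_num)]
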